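/- For all integers 0 ≤ i < j < k, the polynomial E_{2i}(q)·E_{j+k}(q)² + E_{2j}(q)·E_{i+k}(q)² + E_{2k}(q)·E_{i+j}(q)² − 3·E_{i+j}(q)·E_{j+k}(q)·E_{k+i}(q) is q-nonnegative, where E_n(q) is the n-th Eulerian polynomial. -/

import Mathlib

/-!
The inequality is the nonnegativity of a monomial immanant. Consider the Hankel
matrix with rows and columns indexed by `i, j, k`. Its entries are
`E_{a+b} = ∑ m, q ^ m * u_{a,m} * u_{b,m}`, where `u_{n+1} = u_n * P` for the tridiagonal operator `P`
of the continued fraction of the Eulerian polynomials, starting at `u_0 = (1, 0, 0, …)`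
(`pairing_row`, `row_zero_eq`). The link with permutations is the recurrence
`E_{n+1} = (1 + n q) E_n + q (1 - q) E_n'`, obtained by inserting the largest value into a permutation
(`eulerianPoly_succ`); the rows `u_n` obey it because of the first-order differential relation
`row_derivative`.

With `x = E_{i+j}`, `y = E_{i+k}`, `z = E_{j+k}`, `a = E_{2i}`, `b = E_{2j}`, `c = E_{2k}`, the polynomial
in question is
`(c x² - 2 x y z + b y²) + (a z² - 2 x y z + b y²) + y (x z - b y)`,
a sum of three Temperley–Lieb immanants. Each is a sum over the columns of the rows `u_i, u_j, u_k`,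
and after symmetrization each summand is a nonnegative combination of products of entries, of
`2 × 2` minors and of two cubic forms in a `3 × 3` submatrix
(`quadForm_mem`, `minorForm_mem`). The entries, minors and cubic forms are `q`-nonnegative
(`TNTriple`), because `P` is a product of two bidiagonal operators with `q`-nonnegative entries and each
of them preserves this property (`TNTriple.bidiag`).
-/

open Polynomial

/-- A polynomial is `q`-nonnegative if all of its coefficients are nonnegative. -/
def QNonneg (f : Polynomial ℝ) : Prop := ∀ i, 0 ≤ f.coeff i

/-- The number of descents of a permutation of `Fin n`. -/
def descents {n : ℕ} (π : Equiv.Perm (Fin n)) : ℕ :=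
  (Finset.univ.filter fun i : Fin n =>
    ∃ j : Fin n, (j : ℕ) = (i : ℕ) + 1 ∧ π j < π i).card

/-- The `n`-th Eulerian polynomial `E_n(q) = Σ_{π ∈ 𝔖_n} q^{des(π)}`. -/
noncomputable def eulerianPoly (n : ℕ) : Polynomial ℝ :=
  ∑ π : Equiv.Perm (Fin n), Polynomial.X ^ descents π

/-! ### The semiring of `q`-nonnegative polynomials -/

/-- The subsemiring of `ℝ[X]` of all `q`-nonnegative polynomials. -/
def qCone : Subsemiring ℝ[X] where
  carrier := {f | QNonneg f}
  mul_mem' := by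
    intro f g hf hg n
    rw [coeff_mul]
    exact Finset.sum_nonneg fun x _ => mul_nonneg (hf _) (hg _)
  one_mem' := by
    intro n
    rw [coeff_one]
    split_ifs <;> norm_num
  add_mem' := by
    intro f g hf hg n
    rw [coeff_add]
    exact add_nonneg (hf n) (hg n)
  zero_mem' := by
    intro n
    simp

theorem mem_qCone {f : ℝ[X]} : f ∈ qCone ↔ QNonneg f := Iff.rfl

theorem X_mem_qCone : (X : ℝ[X]) ∈ qCone := by
  intro n
  rw [coeff_X]
  split_ifs <;> norm_num

theorem qCone_of_nsmul {f : ℝ[X]} (n : ℕ) (hn : 0 < n) (h : (n : ℝ[X]) * f ∈ qCone) :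
    f ∈ qCone := by
  intro i
  have := h i
  rw [coeff_natCast_mul] at this
  exact nonneg_of_mul_nonneg_right this (by exact_mod_cast hn)

/-! ### Total nonnegativity of three rows -/

/-- The `2 × 2` minor of the rows `I, J` in the columns `p, q`. -/
noncomputable def minor (I J : ℕ → ℝ[X]) (p q : ℕ) : ℝ[X] := I p * J q - I q * J p

/-- Three rows whose entries, whose `2 × 2` minors of consecutive rows, and whose two cubic forms
(the Temperley–Lieb immanants of the simple transpositions) are `q`-nonnegative, for every
choice of increasing columns. -/
structure TNTriple (I J K : ℕ → ℝ[X]) : Prop where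
  fst_mem : ∀ p, I p ∈ qCone
  snd_mem : ∀ p, J p ∈ qCone
  trd_mem : ∀ p, K p ∈ qCone
  minor₁₂ : ∀ p q, p < q → minor I J p q ∈ qCone
  minor₂₃ : ∀ p q, p < q → minor J K p q ∈ qCone
  cubic₁ : ∀ p q r, p < q → q < r → I q * minor J K p r - I r * minor J K p q ∈ qCone
  cubic₂ : ∀ p q r, p < q → q < r → K q * minor I J p r - K p * minor I J q r ∈ qCone

namespace TNTriple

variable {I J K : ℕ → ℝ[X]}

theorem minor_self (I J : ℕ → ℝ[X]) (p : ℕ) : minor I J p p = 0 := by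
  simp [minor]

theorem minor₁₂_le (h : TNTriple I J K) {p q : ℕ} (hpq : p ≤ q) : minor I J p q ∈ qCone := by
  rcases hpq.eq_or_lt with rfl | hlt
  · rw [minor_self]; exact zero_mem _
  · exact h.minor₁₂ p q hlt

theorem minor₂₃_le (h : TNTriple I J K) {p q : ℕ} (hpq : p ≤ q) : minor J K p q ∈ qCone := by
  rcases hpq.eq_or_lt with rfl | hlt
  · rw [minor_self]; exact zero_mem _
  · exact h.minor₂₃ p q hlt

/-- When two columns coincide, the cubic form degenerates to an entry times a minor, or to zero. -/
theorem cubic₁_le (h : TNTriple I J K) {p q r : ℕ} (hpq : p ≤ q) (hqr : q ≤ r) :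
    I q * minor J K p r - I r * minor J K p q ∈ qCone := by
  rcases hqr.eq_or_lt with rfl | hqr'
  · rw [sub_self]; exact zero_mem _
  rcases hpq.eq_or_lt with rfl | hpq'
  · rw [minor_self, mul_zero, sub_zero]
    exact mul_mem (h.fst_mem _) (h.minor₂₃_le hqr)
  · exact h.cubic₁ p q r hpq' hqr'

theorem cubic₂_le (h : TNTriple I J K) {p q r : ℕ} (hpq : p ≤ q) (hqr : q ≤ r) :
    K q * minor I J p r - K p * minor I J q r ∈ qCone := by
  rcases hpq.eq_or_lt with rfl | hpq'
  · rw [sub_self]; exact zero_mem _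
  rcases hqr.eq_or_lt with rfl | hqr'
  · rw [minor_self, mul_zero, sub_zero]
    exact mul_mem (h.trd_mem _) (h.minor₁₂_le hpq)
  · exact h.cubic₂ p q r hpq' hqr'

/-- The column operation replacing column `m` by `a m` times itself plus `b m` times column `f m`. -/
noncomputable def bidiagOp (a b : ℕ → ℝ[X]) (f : ℕ → ℕ) (v : ℕ → ℝ[X]) (m : ℕ) : ℝ[X] :=
  a m * v m + b m * v (f m)

/-- A bidiagonal column operation (`f` is the successor or the predecessor) preserves total
nonnegativity: by multilinearity in the columns, every form becomes a nonnegative combination of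
the same form in columns that are still weakly increasing. -/
theorem bidiag (h : TNTriple I J K) {a b : ℕ → ℝ[X]} {f : ℕ → ℕ}
    (ha : ∀ m, a m ∈ qCone) (hb : ∀ m, b m ∈ qCone) (hf : Monotone f)
    (hf₁ : ∀ p q, p < q → f p ≤ q) (hf₂ : ∀ p q, p < q → p ≤ f q) :
    TNTriple (bidiagOp a b f I) (bidiagOp a b f J) (bidiagOp a b f K) := by
  have entry : ∀ v : ℕ → ℝ[X], (∀ p, v p ∈ qCone) → ∀ p, bidiagOp a b f v p ∈ qCone :=
    fun v hv p => add_mem (mul_mem (ha _) (hv _)) (mul_mem (hb _) (hv _))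
  have minors : ∀ v w : ℕ → ℝ[X], (∀ p q, p ≤ q → minor v w p q ∈ qCone) → ∀ p q, p < q →
      minor (bidiagOp a b f v) (bidiagOp a b f w) p q ∈ qCone := by
    intro v w hvw p q hpq
    have e : minor (bidiagOp a b f v) (bidiagOp a b f w) p q =
        a p * a q * minor v w p q + a p * b q * minor v w p (f q)
        + b p * a q * minor v w (f p) q + b p * b q * minor v w (f p) (f q) := by
      simp only [minor, bidiagOp]; ring
    rw [e]
    exact add_mem (add_mem (add_mem
      (mul_mem (mul_mem (ha _) (ha _)) (hvw _ _ hpq.le))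
      (mul_mem (mul_mem (ha _) (hb _)) (hvw _ _ (hf₂ _ _ hpq))))
      (mul_mem (mul_mem (hb _) (ha _)) (hvw _ _ (hf₁ _ _ hpq))))
      (mul_mem (mul_mem (hb _) (hb _)) (hvw _ _ (hf hpq.le)))
  have trilinear : ∀ S : ℕ → ℕ → ℕ → ℝ[X],
      (∀ p q r, p ≤ q → q ≤ r → S p q r ∈ qCone) → ∀ p q r, p < q → q < r →
      a p * a q * a r * S p q r + a p * a q * b r * S p q (f r)
      + a p * b q * a r * S p (f q) r + a p * b q * b r * S p (f q) (f r)
      + b p * a q * a r * S (f p) q r + b p * a q * b r * S (f p) q (f r)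
      + b p * b q * a r * S (f p) (f q) r + b p * b q * b r * S (f p) (f q) (f r) ∈ qCone := by
    intro S hS p q r hpq hqr
    have hc : ∀ {x y z w : ℝ[X]}, x ∈ qCone → y ∈ qCone → z ∈ qCone → w ∈ qCone →
        x * y * z * w ∈ qCone := fun hx hy hz hw => mul_mem (mul_mem (mul_mem hx hy) hz) hw
    have p1 := hpq.le
    have p2 := hf₂ _ _ hpq
    have p3 := hf₁ _ _ hpq
    have p4 := hf hpq.le
    have q1 := hqr.le
    have q2 := hf₂ _ _ hqr
    have q3 := hf₁ _ _ hqr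
    have q4 := hf hqr.le
    exact add_mem (add_mem (add_mem (add_mem (add_mem (add_mem (add_mem
      (hc (ha _) (ha _) (ha _) (hS _ _ _ p1 q1)) (hc (ha _) (ha _) (hb _) (hS _ _ _ p1 q2)))
      (hc (ha _) (hb _) (ha _) (hS _ _ _ p2 q3))) (hc (ha _) (hb _) (hb _) (hS _ _ _ p2 q4)))
      (hc (hb _) (ha _) (ha _) (hS _ _ _ p3 q1))) (hc (hb _) (ha _) (hb _) (hS _ _ _ p3 q2)))
      (hc (hb _) (hb _) (ha _) (hS _ _ _ p4 q3))) (hc (hb _) (hb _) (hb _) (hS _ _ _ p4 q4))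
  refine ⟨entry _ h.fst_mem, entry _ h.snd_mem, entry _ h.trd_mem,
    minors _ _ fun _ _ => h.minor₁₂_le, minors _ _ fun _ _ => h.minor₂₃_le, ?_, ?_⟩
  · intro p q r hpq hqr
    convert trilinear (fun p q r => I q * minor J K p r - I r * minor J K p q)
      (fun p q r => h.cubic₁_le) p q r hpq hqr using 1
    simp only [minor, bidiagOp]; ring
  · intro p q r hpq hqr
    convert trilinear (fun p q r => K q * minor I J p r - K p * minor I J q r)
      (fun p q r => h.cubic₂_le) p q r hpq hqr using 1
    simp only [minor, bidiagOp]; ring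

end TNTriple

/-! ### Immanants of a weighted Gram matrix -/

/-- The bilinear form `∑ m < N, q ^ m * v m * w m`. -/
noncomputable def pairing (N : ℕ) (v w : ℕ → ℝ[X]) : ℝ[X] :=
  ∑ m ∈ Finset.range N, X ^ m * (v m * w m)

theorem pairing_mem {v w : ℕ → ℝ[X]} (hv : ∀ m, v m ∈ qCone) (hw : ∀ m, w m ∈ qCone) (N : ℕ) :
    pairing N v w ∈ qCone :=
  sum_mem fun _ _ => mul_mem (pow_mem X_mem_qCone _) (mul_mem (hv _) (hw _))

/-- The expression is the square of the vector `⟨V, B⟩ A - ⟨V, A⟩ B` with respect to the pairing, hence a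
triple sum. Its summand, symmetrized over the three indices, is the polynomial in the hypothesis, so
nonnegativity for increasing indices suffices. -/
theorem quadForm_mem (N : ℕ) (V A B : ℕ → ℝ[X])
    (h : ∀ p q r, p ≤ q → q ≤ r →
      V q * V r * minor A B p q * minor A B p r - V p * V r * minor A B p q * minor A B q r
        + V p * V q * minor A B p r * minor A B q r ∈ qCone) :
    pairing N V A ^ 2 * pairing N B B - 2 * (pairing N V A * pairing N V B * pairing N A B)
      + pairing N V B ^ 2 * pairing N A A ∈ qCone := by
  set F : ℕ → ℕ → ℕ → ℝ[X] := fun m l n =>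
    X ^ m * X ^ l * X ^ n * (V m * V l * minor A B n m * minor A B n l) with hF
  have hsum : pairing N V A ^ 2 * pairing N B B
      - 2 * (pairing N V A * pairing N V B * pairing N A B) + pairing N V B ^ 2 * pairing N A A
      = ∑ m ∈ Finset.range N, ∑ l ∈ Finset.range N, ∑ n ∈ Finset.range N, F m l n := by
    have e : ∀ f g k : ℕ → ℝ[X],
        (∑ m ∈ Finset.range N, f m) * (∑ m ∈ Finset.range N, g m) * (∑ m ∈ Finset.range N, k m)
        = ∑ m ∈ Finset.range N, ∑ l ∈ Finset.range N, ∑ n ∈ Finset.range N, f m * g l * k n := by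
      intro f g k
      rw [Finset.sum_mul_sum, Finset.sum_mul]
      refine Finset.sum_congr rfl fun m _ => ?_
      rw [Finset.sum_mul]
      refine Finset.sum_congr rfl fun l _ => ?_
      rw [Finset.mul_sum]
    have e0 : pairing N V A ^ 2 * pairing N B B
      - 2 * (pairing N V A * pairing N V B * pairing N A B) + pairing N V B ^ 2 * pairing N A A
      = pairing N V A * pairing N V A * pairing N B B - pairing N V A * pairing N V B * pairing N A B
        - pairing N V B * pairing N V A * pairing N A B
        + pairing N V B * pairing N V B * pairing N A A := by ring
    rw [e0]
    unfold pairing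
    simp only [e, ← Finset.sum_sub_distrib, ← Finset.sum_add_distrib]
    refine Finset.sum_congr rfl fun m _ => Finset.sum_congr rfl fun l _ =>
      Finset.sum_congr rfl fun n _ => ?_
    simp only [hF, minor]; ring
  set G : ℕ → ℕ → ℕ → ℝ[X] := fun m l n => F m l n + F l n m + F n m l with hG
  have hG_sorted : ∀ p q r, p ≤ q → q ≤ r → G p q r ∈ qCone := by
    intro p q r hpq hqr
    have e : G p q r = X ^ p * X ^ q * X ^ r *
        (V q * V r * minor A B p q * minor A B p r - V p * V r * minor A B p q * minor A B q r
        + V p * V q * minor A B p r * minor A B q r) := by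
      simp only [hG, hF, minor]; ring
    rw [e]
    exact mul_mem (mul_mem (mul_mem (pow_mem X_mem_qCone _) (pow_mem X_mem_qCone _))
      (pow_mem X_mem_qCone _)) (h p q r hpq hqr)
  have hG₁ : ∀ p q r, G p q r = G q p r := by
    intro p q r; simp only [hG, hF, minor]; ring
  have hG₂ : ∀ p q r, G p q r = G p r q := by
    intro p q r; simp only [hG, hF, minor]; ring
  have hG_mem : ∀ p q r, G p q r ∈ qCone := by
    intro p q r
    rcases le_total p q with h1 | h1 <;> rcases le_total q r with h2 | h2 <;>
      rcases le_total p r with h3 | h3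
    · exact hG_sorted _ _ _ h1 h2
    · exact hG_sorted _ _ _ h1 h2
    · rw [hG₂]; exact hG_sorted _ _ _ h3 h2
    · rw [hG₂, hG₁]; exact hG_sorted _ _ _ h3 h1
    · rw [hG₁]; exact hG_sorted _ _ _ h1 h3
    · rw [hG₁, hG₂]; exact hG_sorted _ _ _ h2 h3
    · rw [hG₁, hG₂, hG₁]; exact hG_sorted _ _ _ h2 h1
    · rw [hG₁, hG₂, hG₁]; exact hG_sorted _ _ _ h2 h1
  have hrot₁ : ∑ m ∈ Finset.range N, ∑ l ∈ Finset.range N, ∑ n ∈ Finset.range N, F l n m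
      = ∑ m ∈ Finset.range N, ∑ l ∈ Finset.range N, ∑ n ∈ Finset.range N, F m l n := by
    rw [Finset.sum_comm]
    refine Finset.sum_congr rfl fun l _ => ?_
    rw [Finset.sum_comm]
  have hrot₂ : ∑ m ∈ Finset.range N, ∑ l ∈ Finset.range N, ∑ n ∈ Finset.range N, F n m l
      = ∑ m ∈ Finset.range N, ∑ l ∈ Finset.range N, ∑ n ∈ Finset.range N, F m l n := by
    rw [Finset.sum_congr rfl fun m _ => Finset.sum_comm, Finset.sum_comm]
  rw [hsum]
  -- `G` sums `F` over cyclic shifts, and `F` is symmetric in its first two arguments.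
  refine qCone_of_nsmul 3 (by norm_num) ?_
  have e : ((3 : ℕ) : ℝ[X]) *
      ∑ m ∈ Finset.range N, ∑ l ∈ Finset.range N, ∑ n ∈ Finset.range N, F m l n
      = ∑ m ∈ Finset.range N, ∑ l ∈ Finset.range N, ∑ n ∈ Finset.range N, G m l n := by
    simp only [hG, Finset.sum_add_distrib]
    rw [hrot₁, hrot₂]
    push_cast; ring
  rw [e]
  exact sum_mem fun _ _ => sum_mem fun _ _ => sum_mem fun _ _ => hG_mem _ _ _

/-- The Cauchy–Binet expansion of a `2 × 2` minor of the Gram matrix. -/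
theorem minorForm_mem (N : ℕ) {I J K : ℕ → ℝ[X]} (h : TNTriple I J K) :
    pairing N I J * pairing N J K - pairing N J J * pairing N I K ∈ qCone := by
  set F : ℕ → ℕ → ℝ[X] := fun m n => X ^ m * X ^ n * (J m * K n * minor I J m n) with hF
  have hsum : pairing N I J * pairing N J K - pairing N J J * pairing N I K
      = ∑ m ∈ Finset.range N, ∑ n ∈ Finset.range N, F m n := by
    unfold pairing
    simp only [Finset.sum_mul_sum, ← Finset.sum_sub_distrib]
    refine Finset.sum_congr rfl fun m _ => Finset.sum_congr rfl fun n _ => ?_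
    simp only [hF, minor]; ring
  have e : ((2 : ℕ) : ℝ[X]) * ∑ m ∈ Finset.range N, ∑ n ∈ Finset.range N, F m n
      = ∑ m ∈ Finset.range N, ∑ n ∈ Finset.range N,
        X ^ m * X ^ n * (minor I J m n * minor J K m n) := by
    have e1 : ((2 : ℕ) : ℝ[X]) * ∑ m ∈ Finset.range N, ∑ n ∈ Finset.range N, F m n
        = ∑ m ∈ Finset.range N, ∑ n ∈ Finset.range N, F m n
          + ∑ m ∈ Finset.range N, ∑ n ∈ Finset.range N, F n m := by
      rw [Finset.sum_comm (f := fun m n => F n m)]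
      push_cast; ring
    rw [e1]
    simp only [← Finset.sum_add_distrib]
    refine Finset.sum_congr rfl fun m _ => Finset.sum_congr rfl fun n _ => ?_
    simp only [hF, minor]; ring
  rw [hsum]
  refine qCone_of_nsmul 2 (by norm_num) ?_
  rw [e]
  refine sum_mem fun m _ => sum_mem fun n _ =>
    mul_mem (mul_mem (pow_mem X_mem_qCone _) (pow_mem X_mem_qCone _)) ?_
  rcases le_total m n with hmn | hmn
  · exact mul_mem (h.minor₁₂_le hmn) (h.minor₂₃_le hmn)
  · have : minor I J m n * minor J K m n = minor I J n m * minor J K n m := by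
      simp only [minor]; ring
    rw [this]
    exact mul_mem (h.minor₁₂_le hmn) (h.minor₂₃_le hmn)

/-- The monomial immanant of shape `(2, 1)` of the Gram matrix of three rows, split into three
Temperley–Lieb immanants. -/
theorem TNTriple.immanant_mem (N : ℕ) {I J K : ℕ → ℝ[X]} (h : TNTriple I J K) :
    pairing N I I * pairing N J K ^ 2 + pairing N J J * pairing N I K ^ 2
      + pairing N K K * pairing N I J ^ 2
      - 3 * (pairing N I J * pairing N J K * pairing N I K) ∈ qCone := by
  -- The symmetrized summand is
  -- `I_p Δ_qr (I_q Δ_pr - I_r Δ_pq) + I_r Δ_pq I_q Δ_pr` with `Δ` the minors of `J, K`.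
  have h1 := quadForm_mem N I J K (by
    intro p q r hpq hqr
    convert add_mem
      (mul_mem (mul_mem (h.fst_mem p) (h.minor₂₃_le hqr)) (h.cubic₁_le hpq hqr))
      (mul_mem (mul_mem (h.fst_mem r) (h.minor₂₃_le hpq))
        (mul_mem (h.fst_mem q) (h.minor₂₃_le (hpq.trans hqr)))) using 1
    ring)
  have h2 := quadForm_mem N K I J (by
    intro p q r hpq hqr
    convert add_mem
      (mul_mem (mul_mem (h.trd_mem r) (h.minor₁₂_le hpq)) (h.cubic₂_le hpq hqr))
      (mul_mem (mul_mem (h.trd_mem p) (h.minor₁₂_le hqr))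
        (mul_mem (h.trd_mem q) (h.minor₁₂_le (hpq.trans hqr)))) using 1
    ring)
  have h3 := mul_mem (pairing_mem h.fst_mem h.trd_mem N) (minorForm_mem N h)
  have symm : ∀ v w, pairing N v w = pairing N w v := fun v w =>
    Finset.sum_congr rfl fun m _ => by rw [mul_comm (v m)]
  rw [symm K I, symm K J] at h2
  convert add_mem (add_mem h1 h2) h3 using 1
  ring

/-! ### The tridiagonal operator -/

/-- The rows `u_n` generated by the tridiagonal operator
`(u P)_m = m u_{m-1} + (m + 1 + m q) u_m + (m + 1) q u_{m+1}`, written in the factored form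
`m w_{m-1} + (m + 1) w_m` with `w_m = u_m + q u_{m+1}`. For `m = 0` the truncated index `m - 1`
carries the coefficient `0`. -/
noncomputable def row : ℕ → ℕ → ℝ[X]
  | 0, m => if m = 0 then 1 else 0
  | n + 1, m => ((m : ℝ[X]) + 1) * (row n m + X * row n (m + 1))
      + (m : ℝ[X]) * (row n (m - 1) + X * row n (m - 1 + 1))

theorem row_succ_zero (n : ℕ) : row (n + 1) 0 = row n 0 + X * row n 1 := by
  simp [row]

theorem row_succ_succ (n m : ℕ) : row (n + 1) (m + 1) =
    ((m : ℝ[X]) + 1) * row n m + ((m : ℝ[X]) + 2 + ((m : ℝ[X]) + 1) * X) * row n (m + 1)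
      + ((m : ℝ[X]) + 2) * X * row n (m + 2) := by
  simp only [row, Nat.add_sub_cancel]
  push_cast
  ring

theorem row_eq_zero (n : ℕ) : ∀ m, n < m → row n m = 0 := by
  induction n with
  | zero => intro m hm; simp [row, hm.ne']
  | succ n ih =>
    intro m hm
    obtain ⟨m, rfl⟩ : ∃ l, m = l + 1 := ⟨m - 1, by omega⟩
    rw [row_succ_succ, ih m (by omega), ih (m + 1) (by omega), ih (m + 2) (by omega)]
    ring

theorem TNTriple.row_shift {i j k : ℕ} (h : TNTriple (row i) (row j) (row k)) :
    TNTriple (row (i + 1)) (row (j + 1)) (row (k + 1)) := by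
  have hU := h.bidiag (a := fun _ => 1) (b := fun _ => X) (f := fun m => m + 1)
    (fun _ => one_mem _) (fun _ => X_mem_qCone) (fun p q hpq => by simpa using hpq)
    (fun p q hpq => hpq) (fun p q hpq => by omega)
  have hL := hU.bidiag (a := fun m => (m : ℝ[X]) + 1) (b := fun m => (m : ℝ[X]))
    (f := fun m => m - 1) (fun m => add_mem (natCast_mem _ _) (one_mem _))
    (fun m => natCast_mem _ _) (fun p q hpq => Nat.sub_le_sub_right hpq 1)
    (fun p q hpq => by omega) (fun p q hpq => by omega)
  have e : ∀ n, TNTriple.bidiagOp (fun m => (m : ℝ[X]) + 1) (fun m => (m : ℝ[X])) (fun m => m - 1)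
      (TNTriple.bidiagOp (fun _ => 1) (fun _ => X) (fun m => m + 1) (row n)) = row (n + 1) := by
    intro n
    funext m
    simp only [TNTriple.bidiagOp, row, one_mul]
  rwa [e, e, e] at hL

theorem row_mem (n : ℕ) : ∀ m, row n m ∈ qCone := by
  induction n with
  | zero => intro m; simp only [row]; split_ifs <;> simp
  | succ n ih =>
    intro m
    simp only [row]
    exact add_mem
      (mul_mem (add_mem (natCast_mem _ _) (one_mem _)) (add_mem (ih _) (mul_mem X_mem_qCone (ih _))))
      (mul_mem (natCast_mem _ _) (add_mem (ih _) (mul_mem X_mem_qCone (ih _))))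

theorem row_zero_pos {q : ℕ} (h : 0 < q) : row 0 q = 0 := row_eq_zero 0 q h

theorem minor_row_zero {p q : ℕ} (hpq : p < q) (J : ℕ → ℝ[X]) :
    minor (row 0) J p q = if p = 0 then J q else 0 := by
  simp only [minor, row_zero_pos (by omega : 0 < q)]
  split_ifs with h
  · simp [h, row]
  · simp [row_zero_pos (Nat.pos_of_ne_zero h)]

theorem minor_row_mem {i j : ℕ} (hij : i ≤ j) :
    ∀ p q, p < q → minor (row i) (row j) p q ∈ qCone := by
  -- A repeated first row makes `bidiag` a statement about two rows only.
  have base : ∀ d, TNTriple (row 0) (row 0) (row d) := by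
    intro d
    have h0 : ∀ p q, minor (row 0) (row 0) p q = 0 := fun p q => by simp only [minor]; ring
    refine ⟨row_mem 0, row_mem 0, row_mem d, fun p q _ => ?_, fun p q hpq => ?_,
      fun p q r hpq hqr => ?_, fun p q r hpq hqr => ?_⟩
    · rw [h0]; exact zero_mem _
    · rw [minor_row_zero hpq]
      split_ifs
      · exact row_mem _ _
      · exact zero_mem _
    · rw [row_zero_pos (by omega : 0 < q), row_zero_pos (by omega : 0 < r)]
      simp
    · rw [h0, h0]; simp
  have step : ∀ d n, TNTriple (row n) (row n) (row (d + n)) := by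
    intro d n
    induction n with
    | zero => exact base d
    | succ n ih => exact ih.row_shift
  have := (step (j - i) i).minor₂₃
  rwa [Nat.sub_add_cancel hij] at this

/-- Every weakly increasing triple of rows is totally nonnegative. After removing common powers of the
operator, the first row is `(1, 0, 0, …)`, for which the cubic forms reduce to products of entries. -/
theorem tnTriple_row {i j k : ℕ} (hij : i ≤ j) (hjk : j ≤ k) :
    TNTriple (row i) (row j) (row k) := by
  have base : ∀ a b, a ≤ b → TNTriple (row 0) (row a) (row b) := by
    intro a b hab
    refine ⟨row_mem 0, row_mem a, row_mem b, fun p q hpq => ?_, minor_row_mem hab,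
      fun p q r hpq hqr => ?_, fun p q r hpq hqr => ?_⟩
    · rw [minor_row_zero hpq]
      split_ifs
      · exact row_mem _ _
      · exact zero_mem _
    · rw [row_zero_pos (by omega : 0 < q), row_zero_pos (by omega : 0 < r)]
      simp
    · rw [minor_row_zero hqr, minor_row_zero (hpq.trans hqr), if_neg (by omega : ¬ q = 0),
        mul_zero, sub_zero]
      split_ifs
      · exact mul_mem (row_mem _ _) (row_mem _ _)
      · simp
  have step : ∀ a b n, a ≤ b → TNTriple (row n) (row (a + n)) (row (b + n)) := by
    intro a b n hab
    induction n with
    | zero => exact base a b hab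
    | succ n ih => exact ih.row_shift
  have := step (j - i) (k - i) i (by omega)
  rwa [Nat.sub_add_cancel hij, Nat.sub_add_cancel (hij.trans hjk)] at this

/-- The tridiagonal operator is self-adjoint for the pairing: the difference of the two sides
telescopes. -/
theorem pairing_row_succ (N a b : ℕ) (ha : a < N) (hb : b < N) :
    pairing N (row (a + 1)) (row b) = pairing N (row a) (row (b + 1)) := by
  rw [← sub_eq_zero]
  set t : ℕ → ℝ[X] := fun m =>
    (m : ℝ[X]) * X ^ m * (row a m * row b (m - 1) - row a (m - 1) * row b m) with ht
  have hd : pairing N (row (a + 1)) (row b) - pairing N (row a) (row (b + 1))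
      = ∑ m ∈ Finset.range N, (t (m + 1) - t m) := by
    unfold pairing
    rw [← Finset.sum_sub_distrib]
    refine Finset.sum_congr rfl fun m _ => ?_
    rcases m with _ | m
    · simp only [ht, row_succ_zero]
      simp
      ring
    · simp only [ht, row_succ_succ, Nat.add_sub_cancel]
      push_cast
      ring
  rw [hd, Finset.sum_range_sub]
  simp [ht, row_eq_zero a N ha, row_eq_zero b N hb]

theorem pairing_row (N a b : ℕ) (h : a + b < N) :
    pairing N (row a) (row b) = row (a + b) 0 := by
  induction b generalizing a with
  | zero =>
    unfold pairing
    rw [Finset.sum_eq_single_of_mem 0 (Finset.mem_range.2 (by omega))]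
    · simp [row]
    · intro m _ hm
      simp [row, hm]
  | succ b ih =>
    rw [← pairing_row_succ N a b (by omega) (by omega), ih (a + 1) (by omega)]
    congr 1
    omega

/-- In terms of exponential generating functions, `∑ n, u_{n,m} t ^ n / n! = f * g ^ m` with
`g' = (1 + g) (1 + q g)` and `f = 1 + g`; the relation expresses the action of the derivation
`t ∂_t + (1 - q) ∂_q` on `f * g ^ m`. -/
theorem row_derivative (n : ℕ) : ∀ m : ℕ, ((m : ℝ[X]) + 1) * row n (m + 1) =
    ((n : ℝ[X]) - (m : ℝ[X])) * row n m + (1 - X) * derivative (row n m) := by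
  induction n with
  | zero =>
    intro m
    rcases m with _ | m <;> simp [row]
  | succ n ih =>
    intro m
    rcases m with _ | m
    · have h0 := ih 0
      have h1 := ih 1
      rw [row_succ_zero, row_succ_succ]
      simp only [derivative_add, derivative_mul, derivative_X]
      push_cast at h0 h1 ⊢
      norm_num at h0 h1 ⊢
      linear_combination h0 + X * h1
    · have h0 := ih m
      have h1 := ih (m + 1)
      have h2 := ih (m + 2)
      rw [row_succ_succ, row_succ_succ]
      simp only [derivative_add, derivative_mul, derivative_X, derivative_natCast, derivative_one,
        derivative_ofNat]
      push_cast at h0 h1 h2 ⊢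
      linear_combination ((m : ℝ[X]) + 1) * h0
        + ((m : ℝ[X]) + 2 + ((m : ℝ[X]) + 1) * X) * h1 + ((m : ℝ[X]) + 2) * X * h2

theorem row_zero_recurrence (n : ℕ) :
    row (n + 1) 0 = (1 + (n : ℝ[X]) * X) * row n 0 + X * (1 - X) * derivative (row n 0) := by
  have h := row_derivative n 0
  rw [row_succ_zero]
  push_cast at h
  linear_combination X * h

/-! ### Inserting the largest value into a permutation -/

/-- The permutation of `Fin (n + 1)` whose one-line word is that of `σ` with the largest value
inserted at position `p`. -/
def insertMax {n : ℕ} (p : Fin (n + 1)) (σ : Equiv.Perm (Fin n)) : Equiv.Perm (Fin (n + 1)) :=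
  (finSuccEquiv' p).trans ((Equiv.optionCongr σ).trans (finSuccEquiv' (Fin.last n)).symm)

theorem insertMax_self {n : ℕ} (p : Fin (n + 1)) (σ : Equiv.Perm (Fin n)) :
    insertMax p σ p = Fin.last n := by
  simp [insertMax]

theorem insertMax_succAbove {n : ℕ} (p : Fin (n + 1)) (σ : Equiv.Perm (Fin n)) (i : Fin n) :
    insertMax p σ (p.succAbove i) = (σ i).castSucc := by
  simp [insertMax]

theorem insertMax_bijective (n : ℕ) :
    Function.Bijective fun x : Fin (n + 1) × Equiv.Perm (Fin n) => insertMax x.1 x.2 := by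
  rw [Fintype.bijective_iff_injective_and_card]
  constructor
  · rintro ⟨p, σ⟩ ⟨p', σ'⟩ h
    simp only at h
    have hp : p = p' := by
      apply (insertMax p σ).injective
      rw [insertMax_self, h, insertMax_self]
    subst hp
    congr 1
    ext i
    have := insertMax_succAbove p σ i
    rw [h, insertMax_succAbove] at this
    exact congrArg Fin.val (Fin.castSucc_injective _ this).symm
  · simp [Fintype.card_perm, Nat.factorial_succ]

/-- The set of descents of a permutation of `Fin n`. -/
def descSet {n : ℕ} (π : Equiv.Perm (Fin n)) : Finset (Fin n) :=
  Finset.univ.filter fun i : Fin n => ∃ j : Fin n, (j : ℕ) = (i : ℕ) + 1 ∧ π j < π i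

theorem card_descSet {n : ℕ} (π : Equiv.Perm (Fin n)) : (descSet π).card = descents π := rfl

theorem val_succAbove {n : ℕ} (p : Fin (n + 1)) (i : Fin n) :
    (p.succAbove i : ℕ) = if (i : ℕ) < p then (i : ℕ) else (i : ℕ) + 1 := by
  rw [Fin.succAbove]
  simp only [Fin.lt_def, Fin.val_castSucc]
  split_ifs <;> simp

/-- Inserting the largest value at `p` destroys a descent into position `p`, keeps all other
descents, and creates a descent at `p` unless `p` is the last position. -/
theorem descSet_insertMax {n : ℕ} (p : Fin (n + 1)) (σ : Equiv.Perm (Fin n)) :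
    descSet (insertMax p σ) =
      ((descSet σ).filter fun i : Fin n => (i : ℕ) + 1 ≠ p).map p.succAboveEmb
        ∪ (if p = Fin.last n then ∅ else {p}) := by
  ext x
  rcases Fin.eq_self_or_eq_succAbove p x with rfl | ⟨i, rfl⟩
  · have h1 : x ∉ ((descSet σ).filter fun i : Fin n => (i : ℕ) + 1 ≠ x).map x.succAboveEmb := by
      simp [Fin.succAbove_ne]
    rw [Finset.mem_union, or_iff_right h1]
    simp only [descSet, Finset.mem_filter, Finset.mem_univ, true_and, insertMax_self]
    split_ifs with hx
    · simp only [Finset.notMem_empty, iff_false]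
      rintro ⟨j, hj, -⟩
      have := j.isLt
      rw [hx, Fin.val_last] at hj
      omega
    · simp only [Finset.mem_singleton, iff_true]
      have hx' : (x : ℕ) < n := Fin.val_lt_last hx
      refine ⟨⟨x + 1, by omega⟩, rfl, ?_⟩
      rcases Fin.eq_self_or_eq_succAbove x ⟨x + 1, by omega⟩ with h | ⟨j, h⟩
      · exact absurd (congrArg Fin.val h) (by simp)
      · rw [h, insertMax_succAbove]
        exact Fin.castSucc_lt_last _
  · have h1 : p.succAbove i ∉ (if p = Fin.last n then ∅ else {p} : Finset (Fin (n + 1))) := by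
      split_ifs <;> simp [Fin.succAbove_ne]
    rw [Finset.mem_union, or_iff_left h1]
    have h2 : p.succAbove i ∈ ((descSet σ).filter fun i : Fin n => (i : ℕ) + 1 ≠ p).map p.succAboveEmb ↔
        i ∈ (descSet σ).filter fun i : Fin n => (i : ℕ) + 1 ≠ p :=
      Finset.mem_map' p.succAboveEmb
    rw [h2]
    simp only [descSet, Finset.mem_filter, Finset.mem_univ, true_and, insertMax_succAbove]
    constructor
    · rintro ⟨j, hj, hlt⟩
      rcases Fin.eq_self_or_eq_succAbove p j with rfl | ⟨j, rfl⟩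
      · rw [insertMax_self] at hlt
        exact absurd hlt (not_lt.2 (Fin.le_last _))
      · rw [insertMax_succAbove, Fin.castSucc_lt_castSucc_iff] at hlt
        rw [val_succAbove, val_succAbove] at hj
        refine ⟨⟨j, ?_, hlt⟩, ?_⟩
        · split_ifs at hj <;> omega
        · split_ifs at hj <;> omega
    · rintro ⟨⟨j, hj, hlt⟩, hp⟩
      refine ⟨p.succAbove j, ?_, ?_⟩
      · rw [val_succAbove, val_succAbove]
        split_ifs <;> omega
      · rwa [insertMax_succAbove, Fin.castSucc_lt_castSucc_iff]

theorem descents_insertMax_last {n : ℕ} (σ : Equiv.Perm (Fin n)) :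
    descents (insertMax (Fin.last n) σ) = descents σ := by
  rw [← card_descSet, descSet_insertMax, if_pos rfl, Finset.union_empty, Finset.card_map,
    Finset.filter_true_of_mem, card_descSet]
  intro i hi
  obtain ⟨j, hj, -⟩ := (Finset.mem_filter.1 hi).2
  have := j.isLt
  rw [Fin.val_last]
  omega

/-- The set of positions right after a descent. -/
def descBottoms {n : ℕ} (π : Equiv.Perm (Fin n)) : Finset (Fin n) :=
  Finset.univ.filter fun j : Fin n => ∃ i : Fin n, (j : ℕ) = (i : ℕ) + 1 ∧ π j < π i

theorem card_descBottoms {n : ℕ} (π : Equiv.Perm (Fin n)) : (descBottoms π).card = descents π := by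
  symm
  rw [← card_descSet]
  have hb : ∀ i ∈ descSet π, (i : ℕ) + 1 < n := by
    intro i hi
    obtain ⟨j, hj, -⟩ := (Finset.mem_filter.1 hi).2
    have := j.isLt
    omega
  refine Finset.card_bij (fun i hi => ⟨i + 1, hb i hi⟩) ?_ ?_ ?_
  · intro i hi
    obtain ⟨j, hj, hlt⟩ := (Finset.mem_filter.1 hi).2
    have e : j = ⟨i + 1, hb i hi⟩ := Fin.ext hj
    exact Finset.mem_filter.2 ⟨Finset.mem_univ _, i, rfl, e ▸ hlt⟩
  · intro i _ i' _ h
    have := congrArg Fin.val h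
    simp only at this
    exact Fin.ext (by omega)
  · intro j hj
    obtain ⟨i, hi, hlt⟩ := (Finset.mem_filter.1 hj).2
    exact ⟨i, Finset.mem_filter.2 ⟨Finset.mem_univ _, j, hi, hlt⟩, Fin.ext hi.symm⟩

theorem descents_insertMax_castSucc {n : ℕ} (p : Fin n) (σ : Equiv.Perm (Fin n)) :
    descents (insertMax p.castSucc σ) =
      if p ∈ descBottoms σ then descents σ else descents σ + 1 := by
  have hd : Disjoint (((descSet σ).filter fun i : Fin n => (i : ℕ) + 1 ≠ p.castSucc).map
      p.castSucc.succAboveEmb) {p.castSucc} := by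
    simp [Fin.succAbove_ne]
  rw [← card_descSet, descSet_insertMax, if_neg (Fin.castSucc_lt_last p).ne,
    Finset.card_union_of_disjoint hd, Finset.card_map, Finset.card_singleton, ← card_descSet]
  split_ifs with hp
  · obtain ⟨i, hi, hlt⟩ := (Finset.mem_filter.1 hp).2
    have hmem : i ∈ descSet σ := Finset.mem_filter.2 ⟨Finset.mem_univ _, p, hi, hlt⟩
    have e : ((descSet σ).filter fun i : Fin n => (i : ℕ) + 1 ≠ p.castSucc) = (descSet σ).erase i := by
      ext l
      rw [Finset.mem_filter, Finset.mem_erase, and_comm, Fin.val_castSucc, hi, Ne, add_left_inj, ← Fin.ext_iff]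
    rw [e, Finset.card_erase_add_one hmem]
  · rw [Finset.filter_true_of_mem]
    intro i hi h
    obtain ⟨j, hj, hlt⟩ := (Finset.mem_filter.1 hi).2
    have e : j = p := Fin.ext (hj.trans h)
    exact hp (Finset.mem_filter.2 ⟨Finset.mem_univ _, i, e ▸ hj, e ▸ hlt⟩)

theorem sum_insertMax {n : ℕ} (σ : Equiv.Perm (Fin n)) :
    ∑ p : Fin (n + 1), (X : ℝ[X]) ^ descents (insertMax p σ) =
      (1 + (n : ℝ[X]) * X) * X ^ descents σ + X * (1 - X) * derivative (X ^ descents σ) := by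
  rw [Fin.sum_univ_castSucc, descents_insertMax_last]
  have e : ∀ p : Fin n, (X : ℝ[X]) ^ descents (insertMax p.castSucc σ) =
      X ^ (descents σ + 1) + if p ∈ descBottoms σ then X ^ descents σ * (1 - X) else 0 := by
    intro p
    rw [descents_insertMax_castSucc]
    split_ifs
    · ring
    · ring
  simp only [e, Finset.sum_add_distrib, Finset.sum_ite_mem, Finset.univ_inter, Finset.sum_const,
    card_descBottoms, Finset.card_univ, Fintype.card_fin, nsmul_eq_mul, derivative_X_pow]
  rcases descents σ with _ | d
  · simp; ring
  · simp only [Nat.add_sub_cancel, map_natCast]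
    ring

theorem eulerianPoly_succ (n : ℕ) : eulerianPoly (n + 1) =
    (1 + (n : ℝ[X]) * X) * eulerianPoly n + X * (1 - X) * derivative (eulerianPoly n) := by
  have h : eulerianPoly (n + 1) = ∑ x : Fin (n + 1) × Equiv.Perm (Fin n),
      (X : ℝ[X]) ^ descents (insertMax x.1 x.2) :=
    ((insertMax_bijective n).sum_comp fun π => (X : ℝ[X]) ^ descents π).symm
  rw [h, Fintype.sum_prod_type_right]
  simp only [sum_insertMax]
  rw [Finset.sum_add_distrib, ← Finset.mul_sum, ← Finset.mul_sum, ← derivative_sum]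
  rfl

theorem row_zero_eq (n : ℕ) : row n 0 = eulerianPoly n := by
  induction n with
  | zero => simp [row, eulerianPoly, descents]
  | succ n ih => rw [row_zero_recurrence, ih, eulerianPoly_succ]

/-! ### The inequality -/

theorem eulerianPoly_eq_pairing {N a b : ℕ} (h : a + b < N) :
    eulerianPoly (a + b) = pairing N (row a) (row b) := by
  rw [pairing_row N a b h, row_zero_eq]

theorem stmt13 (i j k : ℕ) (hij : i < j) (hjk : j < k) :
    QNonneg (eulerianPoly (2 * i) * eulerianPoly (j + k) ^ 2 +
             eulerianPoly (2 * j) * eulerianPoly (i + k) ^ 2 +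
             eulerianPoly (2 * k) * eulerianPoly (i + j) ^ 2 -
             3 * (eulerianPoly (i + j) * eulerianPoly (j + k) * eulerianPoly (k + i))) := by
  rw [← mem_qCone, two_mul i, two_mul j, two_mul k, add_comm k i]
  have h {a b : ℕ} (ha : a ≤ k) (hb : b ≤ k) :
      eulerianPoly (a + b) = pairing (2 * k + 1) (row a) (row b) :=
    eulerianPoly_eq_pairing (by omega)
  rw [h (a := i) (b := i) (by omega) (by omega), h (a := j) (b := k) (by omega) le_rfl,
    h (a := j) (b := j) (by omega) (by omega), h (a := i) (b := k) (by omega) le_rfl,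
    h (a := k) (b := k) le_rfl le_rfl, h (a := i) (b := j) (by omega) (by omega)]
  exact (tnTriple_row hij.le hjk.le).immanant_mem (2 * k + 1)
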